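/- arXiv:1501.03267 — 2 statements merged into one kernel-verified Lean document; each statement's English description precedes it below -/
import Mathlib

section
/- Let p, q, r, s ∈ [1,∞] with r ≤ p, and let M = {m_{jk}} be a matrix such that Schur multiplication by M is bounded from L(ℓ_p, ℓ_q) to L(ℓ_r, ℓ_s). Let M̃ be obtained from M by repeating the first column (M̃_{j1} = m_{j1}, M̃_{jk} = m_{j(k−1)} for k ≥ 2). Then Schur multiplication by M̃ is also bounded from L(ℓ_p, ℓ_q) to L(ℓ_r, ℓ_s), with the same norm as M. -/
open scoped ENNReal

/-- The operator norm of an `n×n` matrix viewed as an operator from `ℓ_p^n` to `ℓ_q^n`. -/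
noncomputable def lpqOpNorm (p q : ℝ≥0∞) [Fact (1 ≤ p)] [Fact (1 ≤ q)] {n : ℕ}
    (A : Matrix (Fin n) (Fin n) ℂ) : ℝ :=
  ‖LinearMap.toContinuousLinearMap
    (((WithLp.linearEquiv q ℂ (∀ _ : Fin n, ℂ)).symm.toLinearMap.comp
      A.mulVecLin).comp
      (WithLp.linearEquiv p ℂ (∀ _ : Fin n, ℂ)).toLinearMap)‖

/-- The matrix `M̃` obtained from `M` by repeating the first column. -/
def colRepeat (M : ℕ → ℕ → ℂ) : ℕ → ℕ → ℂ := fun j k => M j (k - 1)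

theorem aux_norm_le (p : ℝ≥0∞) [hp : Fact (1 ≤ p)] {m n : ℕ} (x : Fin m → ℂ) (y : Fin n → ℂ)
    (h1 : p = ∞ → ∀ i, x i = 0 ∨ ∃ j, ‖x i‖ ≤ ‖y j‖)
    (h2 : p ≠ ∞ → 0 < p.toReal → ∑ i, ‖x i‖ ^ p.toReal ≤ ∑ i, ‖y i‖ ^ p.toReal) :
    ‖WithLp.toLp p x‖ ≤ ‖WithLp.toLp p y‖ := by
  by_cases h : p = ∞
  · subst h
    have key : ∀ i, ‖x i‖ ≤ ‖WithLp.toLp ∞ y‖ := by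
      intro i
      rcases h1 rfl i with h | ⟨j, hj⟩
      · rw [h, norm_zero]; exact norm_nonneg _
      · exact hj.trans (PiLp.norm_apply_le (WithLp.toLp ∞ y) j)
    rw [PiLp.norm_toLp]
    exact (pi_norm_le_iff_of_nonneg (norm_nonneg _)).2 key
  · have hp0 : 0 < p.toReal :=
      ENNReal.toReal_pos (by have := hp.out; intro h0; simp [h0] at this) h
    rw [PiLp.norm_eq_sum hp0, PiLp.norm_eq_sum hp0]
    exact Real.rpow_le_rpow (Finset.sum_nonneg fun i _ => by positivity) (h2 h hp0) (by positivity)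

theorem aux_apply_le (p q : ℝ≥0∞) [Fact (1 ≤ p)] [Fact (1 ≤ q)] {n : ℕ}
    (A : Matrix (Fin n) (Fin n) ℂ) (x : Fin n → ℂ) :
    ‖WithLp.toLp q (A.mulVec x)‖ ≤ lpqOpNorm p q A * ‖WithLp.toLp p x‖ := by
  exact ContinuousLinearMap.le_opNorm (LinearMap.toContinuousLinearMap
    (((WithLp.linearEquiv q ℂ (∀ _ : Fin n, ℂ)).symm.toLinearMap.comp
      A.mulVecLin).comp
      (WithLp.linearEquiv p ℂ (∀ _ : Fin n, ℂ)).toLinearMap)) (WithLp.toLp p x)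

theorem aux_nonneg (p q : ℝ≥0∞) [Fact (1 ≤ p)] [Fact (1 ≤ q)] {n : ℕ}
    (A : Matrix (Fin n) (Fin n) ℂ) : 0 ≤ lpqOpNorm p q A := norm_nonneg _

theorem aux_le (p q : ℝ≥0∞) [Fact (1 ≤ p)] [Fact (1 ≤ q)] {n : ℕ}
    (A : Matrix (Fin n) (Fin n) ℂ) (K : ℝ) (hK : 0 ≤ K)
    (h : ∀ x : Fin n → ℂ, ‖WithLp.toLp q (A.mulVec x)‖ ≤ K * ‖WithLp.toLp p x‖) :
    lpqOpNorm p q A ≤ K :=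
  ContinuousLinearMap.opNorm_le_bound _ hK fun x => h (WithLp.ofLp x)

theorem aux_scale (p r : ℝ≥0∞) [Fact (1 ≤ p)] [hr : Fact (1 ≤ r)] (hrp : r ≤ p) (a b : ℂ) :
    ∃ (t : ℝ) (α β : ℂ), 0 ≤ t ∧ a = α * t ∧ b = β * t ∧ ‖α‖ ≤ 1 ∧ ‖β‖ ≤ 1 ∧
      (p ≠ ∞ → ‖α‖ ^ p.toReal + ‖β‖ ^ p.toReal ≤ 1) ∧
      (r = ∞ → t = ‖a‖ ∨ t = ‖b‖) ∧
      (r ≠ ∞ → t ^ r.toReal = ‖a‖ ^ r.toReal + ‖b‖ ^ r.toReal) := by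
  by_cases h : r = ∞
  · have hp : p = ∞ := top_le_iff.1 (h ▸ hrp)
    have ha : ‖a‖ ≤ max ‖a‖ ‖b‖ := le_max_left _ _
    have hb : ‖b‖ ≤ max ‖a‖ ‖b‖ := le_max_right _ _
    have hmm := max_choice ‖a‖ ‖b‖
    generalize max ‖a‖ ‖b‖ = t at ha hb hmm
    have ht : 0 ≤ t := (norm_nonneg _).trans ha
    rcases ht.eq_or_lt with h0 | h0
    · subst h0
      have ha' : a = 0 := by simpa using ha
      have hb' : b = 0 := by simpa using hb
      exact ⟨0, 0, 0, le_rfl, by simp [ha'], by simp [hb'], by simp, by simp,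
        fun h => (h hp).elim, fun _ => hmm, fun h' => (h' h).elim⟩
    · have hc : (t : ℂ) ≠ 0 := by exact_mod_cast h0.ne'
      refine ⟨t, a / t, b / t, ht, by field_simp, by field_simp, ?_, ?_,
        fun h => (h hp).elim, fun _ => hmm, fun h' => (h' h).elim⟩
      · rw [norm_div, Complex.norm_of_nonneg ht]; exact div_le_one_of_le₀ ha ht
      · rw [norm_div, Complex.norm_of_nonneg ht]; exact div_le_one_of_le₀ hb ht
  · have hr0 : 0 < r.toReal :=
      ENNReal.toReal_pos (by have := hr.out; intro h0; simp [h0] at this) h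
    obtain ⟨t, ht, htr⟩ : ∃ t : ℝ, 0 ≤ t ∧ t ^ r.toReal = ‖a‖ ^ r.toReal + ‖b‖ ^ r.toReal :=
      ⟨(‖a‖ ^ r.toReal + ‖b‖ ^ r.toReal) ^ (r.toReal)⁻¹, by positivity,
        Real.rpow_inv_rpow (by positivity) hr0.ne'⟩
    have ha : ‖a‖ ≤ t := by
      rw [← Real.rpow_le_rpow_iff (norm_nonneg _) ht hr0, htr]
      have : 0 ≤ ‖b‖ ^ r.toReal := by positivity
      linarith
    have hb : ‖b‖ ≤ t := by
      rw [← Real.rpow_le_rpow_iff (norm_nonneg _) ht hr0, htr]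
      have : 0 ≤ ‖a‖ ^ r.toReal := by positivity
      linarith
    rcases ht.eq_or_lt with h0 | h0
    · subst h0
      have ha' : a = 0 := by simpa using ha
      have hb' : b = 0 := by simpa using hb
      refine ⟨0, 0, 0, le_rfl, by simp [ha'], by simp [hb'], by simp, by simp,
        fun hp => ?_, fun h' => (h h').elim, fun _ => htr⟩
      have : p.toReal ≠ 0 :=
        (hr0.trans_le ((ENNReal.toReal_le_toReal h hp).2 hrp)).ne'
      simp [Real.zero_rpow this]
    · have hc : (t : ℂ) ≠ 0 := by exact_mod_cast h0.ne'
      have hα : ‖a / t‖ = ‖a‖ / t := by rw [norm_div, Complex.norm_of_nonneg ht]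
      have hβ : ‖b / t‖ = ‖b‖ / t := by rw [norm_div, Complex.norm_of_nonneg ht]
      have hα1 : ‖a‖ / t ≤ 1 := div_le_one_of_le₀ ha ht
      have hβ1 : ‖b‖ / t ≤ 1 := div_le_one_of_le₀ hb ht
      refine ⟨t, a / t, b / t, ht, by field_simp, by field_simp, hα ▸ hα1, hβ ▸ hβ1,
        fun hp => ?_, fun h' => (h h').elim, fun _ => htr⟩
      have hle : r.toReal ≤ p.toReal := (ENNReal.toReal_le_toReal h hp).2 hrp
      rw [hα, hβ]
      calc (‖a‖ / t) ^ p.toReal + (‖b‖ / t) ^ p.toReal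
          ≤ (‖a‖ / t) ^ r.toReal + (‖b‖ / t) ^ r.toReal :=
            add_le_add
              (Real.rpow_le_rpow_of_exponent_ge_of_imp (by positivity) hα1 hle
                (fun _ h => ((hr0.trans_le hle).ne' h).elim))
              (Real.rpow_le_rpow_of_exponent_ge_of_imp (by positivity) hβ1 hle
                (fun _ h => ((hr0.trans_le hle).ne' h).elim))
        _ = 1 := by
            rw [Real.div_rpow (norm_nonneg _) ht, Real.div_rpow (norm_nonneg _) ht,
              ← add_div, ← htr]
            exact div_self (Real.rpow_pos_of_pos h0 _).ne'

theorem aux_cons_zero (p : ℝ≥0∞) [Fact (1 ≤ p)] {n : ℕ} (x : Fin n → ℂ) :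
    ‖WithLp.toLp p (Fin.cons 0 x : Fin (n + 1) → ℂ)‖ ≤ ‖WithLp.toLp p x‖ := by
  apply aux_norm_le
  · intro _ i
    refine Fin.cases (Or.inl rfl) (fun j => Or.inr ⟨j, le_rfl⟩) i
  · intro _ h
    rw [Fin.sum_univ_succ]
    simp [Real.zero_rpow h.ne']

theorem aux_snoc_zero (p : ℝ≥0∞) [Fact (1 ≤ p)] {n : ℕ} (x : Fin n → ℂ) :
    ‖WithLp.toLp p (Fin.snoc x 0 : Fin (n + 1) → ℂ)‖ ≤ ‖WithLp.toLp p x‖ := by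
  apply aux_norm_le
  · intro _ i
    refine Fin.lastCases (Or.inl (by simp)) (fun j => Or.inr ⟨j, by simp⟩) i
  · intro _ h
    rw [Fin.sum_univ_castSucc]
    simp [Real.zero_rpow h.ne']

theorem aux_tail (p : ℝ≥0∞) [Fact (1 ≤ p)] {n : ℕ} (x : Fin (n + 1) → ℂ) :
    ‖WithLp.toLp p (fun i : Fin n => x i.succ)‖ ≤ ‖WithLp.toLp p x‖ := by
  apply aux_norm_le
  · exact fun _ i => Or.inr ⟨i.succ, le_rfl⟩
  · intro _ h
    rw [Fin.sum_univ_succ (n := n)]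
    have : 0 ≤ ‖x 0‖ ^ p.toReal := by positivity
    linarith

theorem aux_init (p : ℝ≥0∞) [Fact (1 ≤ p)] {n : ℕ} (x : Fin (n + 1) → ℂ) :
    ‖WithLp.toLp p (fun i : Fin n => x i.castSucc)‖ ≤ ‖WithLp.toLp p x‖ := by
  apply aux_norm_le
  · exact fun _ i => Or.inr ⟨i.castSucc, le_rfl⟩
  · intro _ h
    rw [Fin.sum_univ_castSucc (n := n)]
    have : 0 ≤ ‖x (Fin.last n)‖ ^ p.toReal := by positivity
    linarith

theorem aux_split (p : ℝ≥0∞) [Fact (1 ≤ p)] {n : ℕ} (α β : ℂ) (hα : ‖α‖ ≤ 1) (hβ : ‖β‖ ≤ 1)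
    (h : p ≠ ∞ → ‖α‖ ^ p.toReal + ‖β‖ ^ p.toReal ≤ 1) (w : Fin (n + 1) → ℂ) :
    ‖WithLp.toLp p (Fin.cons (α * w 0) (Fin.cons (β * w 0) (fun i : Fin n => w i.succ)
      : Fin (n + 1) → ℂ) : Fin (n + 2) → ℂ)‖ ≤ ‖WithLp.toLp p w‖ := by
  apply aux_norm_le
  · intro _ i
    refine Or.inr (Fin.cases ⟨0, ?_⟩ (fun j => Fin.cases ⟨0, ?_⟩ (fun k => ⟨k.succ, ?_⟩) j) i)
    · simpa using mul_le_of_le_one_left (norm_nonneg _) hα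
    · simpa using mul_le_of_le_one_left (norm_nonneg _) hβ
    · simp
  · intro hp _
    rw [Fin.sum_univ_succ, Fin.sum_univ_succ, Fin.sum_univ_succ (n := n)]
    simp only [Fin.cons_zero, Fin.cons_succ, norm_mul]
    rw [Real.mul_rpow (norm_nonneg _) (norm_nonneg _), Real.mul_rpow (norm_nonneg _) (norm_nonneg _)]
    have h0 : 0 ≤ ‖w 0‖ ^ p.toReal := by positivity
    nlinarith [h hp]

theorem aux_merge (r : ℝ≥0∞) [Fact (1 ≤ r)] {n : ℕ} (t : ℝ) (ht : 0 ≤ t)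
    (x : Fin (n + 2) → ℂ) (h1 : r = ∞ → t = ‖x 0‖ ∨ t = ‖x 1‖)
    (h2 : r ≠ ∞ → t ^ r.toReal = ‖x 0‖ ^ r.toReal + ‖x 1‖ ^ r.toReal) :
    ‖WithLp.toLp r (Fin.cons (t : ℂ) (fun i : Fin n => x i.succ.succ) : Fin (n + 1) → ℂ)‖
      ≤ ‖WithLp.toLp r x‖ := by
  apply aux_norm_le
  · intro hr i
    refine Or.inr (Fin.cases ?_ (fun j => ⟨j.succ.succ, by simp⟩) i)
    rw [Fin.cons_zero, Complex.norm_of_nonneg ht]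
    rcases h1 hr with h | h
    · exact ⟨0, h.le⟩
    · exact ⟨1, h.le⟩
  · intro hr _
    rw [Fin.sum_univ_succ, Fin.sum_univ_succ (n := n + 1), Fin.sum_univ_succ (n := n)]
    simp only [Fin.cons_zero, Fin.cons_succ, Complex.norm_of_nonneg ht, h2 hr, Fin.succ_zero_eq_one]
    linarith

/-- Let `p, q, r, s ∈ [1,∞]` with `r ≤ p`, and let `M` be a matrix such that Schur
multiplication by `M` is bounded from `L(ℓ_p,ℓ_q)` to `L(ℓ_r,ℓ_s)` (expressed via finite
sections).  Then Schur multiplication by `M̃`, obtained by repeating the first column of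
`M`, is bounded with the same norm: a constant `C ≥ 0` bounds the one if and only if it
bounds the other. -/
theorem stmt_15 (p q r s : ℝ≥0∞) [Fact (1 ≤ p)] [Fact (1 ≤ q)] [Fact (1 ≤ r)]
    [Fact (1 ≤ s)] (hrp : r ≤ p) (M : ℕ → ℕ → ℂ) (C : ℝ) (hC : 0 ≤ C) :
    (∀ (n : ℕ) (S : Matrix (Fin n) (Fin n) ℂ),
      lpqOpNorm r s (Matrix.of fun j k : Fin n => M (j : ℕ) (k : ℕ) * S j k) ≤
        C * lpqOpNorm p q S) ↔
    (∀ (n : ℕ) (S : Matrix (Fin n) (Fin n) ℂ),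
      lpqOpNorm r s (Matrix.of fun j k : Fin n => colRepeat M (j : ℕ) (k : ℕ) * S j k) ≤
        C * lpqOpNorm p q S) := by
  constructor
  · intro H n S
    obtain hn | ⟨m, rfl⟩ : n ≤ 1 ∨ ∃ m, n = m + 2 := by
      rcases Nat.lt_or_ge 1 n with h | h
      · exact Or.inr ⟨n - 2, by omega⟩
      · exact Or.inl h
    · have := H n S
      have e : (fun j k : Fin n => colRepeat M (j : ℕ) (k : ℕ) * S j k)
          = fun j k : Fin n => M (j : ℕ) (k : ℕ) * S j k := by
        funext j k
        have : (k : ℕ) - 1 = k := by omega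
        simp only [colRepeat, this]
      rw [e]; exact this
    · apply aux_le _ _ _ _ (mul_nonneg hC (aux_nonneg p q S))
      intro x
      obtain ⟨t, α, β, ht, hx0, hx1, hα, hβ, hpp, hr1, hr2⟩ := aux_scale p r hrp (x 0) (x 1)
      let T : Matrix (Fin (m + 2)) (Fin (m + 2)) ℂ := Matrix.of fun j =>
        (Fin.snoc (Fin.cons (α * S j 0 + β * S j 1) (fun k : Fin m => S j k.succ.succ)
          : Fin (m + 1) → ℂ) 0 : Fin (m + 2) → ℂ)
      let z : Fin (m + 2) → ℂ :=
        Fin.snoc (Fin.cons (t : ℂ) (fun i : Fin m => x i.succ.succ) : Fin (m + 1) → ℂ) 0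
      have hz : ‖WithLp.toLp r z‖ ≤ ‖WithLp.toLp r x‖ :=
        (aux_snoc_zero r _).trans (aux_merge r t ht x hr1 hr2)
      have hT : lpqOpNorm p q T ≤ lpqOpNorm p q S := by
        apply aux_le _ _ _ _ (aux_nonneg p q S)
        intro w
        let v : Fin (m + 1) → ℂ := fun i => w i.castSucc
        have hv := (aux_split p α β hα hβ hpp v).trans (aux_init p w)
        have e : T.mulVec w = S.mulVec (Fin.cons (α * v 0) (Fin.cons (β * v 0)
            (fun i : Fin m => v i.succ) : Fin (m + 1) → ℂ) : Fin (m + 2) → ℂ) := by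
          funext j
          simp only [Matrix.mulVec, dotProduct]
          rw [Fin.sum_univ_castSucc, Fin.sum_univ_succ, Fin.sum_univ_succ (n := m + 1),
            Fin.sum_univ_succ (n := m)]
          simp only [T, v, Matrix.of_apply, Fin.snoc_castSucc, Fin.snoc_last, Fin.cons_zero,
            Fin.cons_succ]
          simp only [Fin.succ_zero_eq_one]
          ring
        rw [e]
        exact (aux_apply_le p q S _).trans (mul_le_mul_of_nonneg_left hv (aux_nonneg p q S))
      have e : (Matrix.of fun j k : Fin (m + 2) =>
            colRepeat M (j : ℕ) (k : ℕ) * S j k).mulVec x =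
          (Matrix.of fun j k : Fin (m + 2) => M (j : ℕ) (k : ℕ) * T j k).mulVec z := by
        funext j
        simp only [Matrix.mulVec, dotProduct]
        rw [Fin.sum_univ_castSucc (n := m + 1)
          (f := fun k => (Matrix.of fun j k : Fin (m + 2) => M (j : ℕ) (k : ℕ) * T j k) j k * z k),
          Fin.sum_univ_succ, Fin.sum_univ_succ (n := m), Fin.sum_univ_succ (n := m)]
        simp only [T, z, colRepeat, Matrix.of_apply, Fin.snoc_castSucc, Fin.snoc_last,
          Fin.cons_zero, Fin.cons_succ, Fin.succ_zero_eq_one, hx0, hx1, Fin.val_zero, Fin.val_one,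
          Fin.val_succ, Fin.val_castSucc, Nat.add_sub_cancel, Nat.sub_self, Nat.zero_sub]
        ring
      rw [e]
      calc _ ≤ _ := aux_apply_le r s _ z
        _ ≤ (C * lpqOpNorm p q T) * ‖WithLp.toLp r z‖ :=
          mul_le_mul_of_nonneg_right (H _ T) (norm_nonneg _)
        _ ≤ (C * lpqOpNorm p q S) * ‖WithLp.toLp r x‖ :=
          mul_le_mul (mul_le_mul_of_nonneg_left hT hC) hz (norm_nonneg _)
            (mul_nonneg hC (aux_nonneg p q S))
  · intro H n S
    apply aux_le _ _ _ _ (mul_nonneg hC (aux_nonneg p q S))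
    intro x
    let T : Matrix (Fin (n + 1)) (Fin (n + 1)) ℂ := Matrix.of
      (Fin.snoc (fun j : Fin n => (Fin.cons 0 (S j) : Fin (n + 1) → ℂ)) 0
        : Fin (n + 1) → Fin (n + 1) → ℂ)
    have hT : lpqOpNorm p q T ≤ lpqOpNorm p q S := by
      apply aux_le _ _ _ _ (aux_nonneg p q S)
      intro w
      have e : T.mulVec w =
          (Fin.snoc (S.mulVec (fun i : Fin n => w i.succ)) 0 : Fin (n + 1) → ℂ) := by
        funext j
        refine Fin.lastCases ?_ (fun j => ?_) j
        · simp [Matrix.mulVec, dotProduct, T]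
        · simp [Matrix.mulVec, dotProduct, T, Fin.sum_univ_succ]
      rw [e]
      exact (aux_snoc_zero q _).trans ((aux_apply_le p q S _).trans
        (mul_le_mul_of_nonneg_left (aux_tail p w) (aux_nonneg p q S)))
    let z : Fin (n + 1) → ℂ := Fin.cons 0 x
    have e : (Matrix.of fun j k : Fin n => M (j : ℕ) (k : ℕ) * S j k).mulVec x =
        fun i : Fin n => (Matrix.of fun j k : Fin (n + 1) =>
          colRepeat M (j : ℕ) (k : ℕ) * T j k).mulVec z i.castSucc := by
      funext j
      simp [Matrix.mulVec, dotProduct, T, z, Fin.sum_univ_succ, colRepeat]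
    rw [e]
    calc _ ≤ _ := aux_init s _
      _ ≤ _ := aux_apply_le r s _ z
      _ ≤ (C * lpqOpNorm p q T) * ‖WithLp.toLp r z‖ :=
        mul_le_mul_of_nonneg_right (H _ T) (norm_nonneg _)
      _ ≤ (C * lpqOpNorm p q S) * ‖WithLp.toLp r x‖ :=
        mul_le_mul (mul_le_mul_of_nonneg_left hT hC) (aux_cons_zero r x) (norm_nonneg _)
          (mul_nonneg hC (aux_nonneg p q S))
end

section
/- For 1 ≠ p ≥ q ≠ ∞ there exists a constant C > 0 such that for all n ∈ ℕ, the triangular truncation operator T_{Δ,n} on L(ℓ_p, ℓ_q), sending S to the matrix with entries s_{kj} for k ≤ j ≤ n and 0 otherwise, satisfies ‖T_{Δ,n}‖_{L(L(ℓ_p,ℓ_q))} ≥ C ln n. -/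
open scoped ENNReal

namespace TriTrunc
open Finset

/-- discrete Hilbert transform on a finite set of integers -/
noncomputable def H (W : Finset ℤ) (f : ℤ → ℂ) (i : ℤ) : ℂ :=
  ∑ j ∈ W, f j * ((i : ℂ) - j)⁻¹

noncomputable def K (W : Finset ℤ) (f : ℤ → ℂ) (i : ℤ) : ℂ :=
  ∑ j ∈ W, f j * (((i : ℂ) - j)⁻¹) ^ 2

noncomputable def κ : ℝ := ∑' m : ℤ, ((m : ℝ)⁻¹) ^ 2

lemma kernel_id (i j k : ℤ) :
    ((i : ℂ) - j)⁻¹ * ((i : ℂ) - k)⁻¹ =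
      ((i : ℂ) - j)⁻¹ * ((j : ℂ) - k)⁻¹ + ((i : ℂ) - k)⁻¹ * ((k : ℂ) - j)⁻¹
      + (if j = k then (((i : ℂ) - j)⁻¹) ^ 2 else 0)
      + (if j = i then (((i : ℂ) - k)⁻¹) ^ 2 else 0)
      + (if k = i then (((i : ℂ) - j)⁻¹) ^ 2 else 0) := by
  have a4 : ((k : ℂ) - j)⁻¹ = -((j : ℂ) - k)⁻¹ := by rw [← inv_neg, neg_sub]
  rw [a4]
  by_cases h1 : j = k
  · subst h1
    by_cases h2 : j = i
    · subst h2; simp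
    · rw [if_pos rfl, if_neg h2]; ring
  · by_cases h2 : j = i
    · subst h2
      rw [if_neg h1, if_pos rfl, if_neg (fun h => h1 h.symm), sub_self, inv_zero]; ring
    · by_cases h3 : k = i
      · subst h3
        have a5 : ((k : ℂ) - j)⁻¹ = -((j : ℂ) - k)⁻¹ := a4
        rw [if_neg h1, if_neg h1, if_pos rfl, sub_self, inv_zero, a5]; ring
      · simp only [h1, h2, h3, if_false]
        have a1 : (i : ℂ) - j ≠ 0 := by
          rw [sub_ne_zero]; exact_mod_cast Ne.symm h2
        have a2 : (i : ℂ) - k ≠ 0 := by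
          rw [sub_ne_zero]; exact_mod_cast Ne.symm h3
        have a3 : (j : ℂ) - k ≠ 0 := by
          rw [sub_ne_zero]; exact_mod_cast h1
        field_simp
        ring

lemma cotlar (W : Finset ℤ) (f : ℤ → ℂ) {i : ℤ} (hi : i ∈ W) :
    (H W f i) ^ 2 = 2 * H W (fun j => f j * H W f j) i + K W (fun j => f j ^ 2) i
      + 2 * (f i * K W f i) := by
  have e1 : (H W f i) ^ 2 = ∑ j ∈ W, ∑ k ∈ W, f j * f k * (((i : ℂ) - j)⁻¹ * ((i : ℂ) - k)⁻¹) := by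
    rw [sq, H, sum_mul_sum]
    refine sum_congr rfl fun j _ => sum_congr rfl fun k _ => by ring
  have e2 : H W (fun j => f j * H W f j) i =
      ∑ j ∈ W, ∑ k ∈ W, f j * f k * (((i : ℂ) - j)⁻¹ * ((j : ℂ) - k)⁻¹) := by
    simp only [H]
    refine sum_congr rfl fun j _ => ?_
    rw [mul_sum, sum_mul]
    refine sum_congr rfl fun k _ => by ring
  have e3 : H W (fun j => f j * H W f j) i =
      ∑ j ∈ W, ∑ k ∈ W, f j * f k * (((i : ℂ) - k)⁻¹ * ((k : ℂ) - j)⁻¹) := by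
    rw [e2, sum_comm]
    refine sum_congr rfl fun j _ => sum_congr rfl fun k _ => by ring
  have e4 : K W (fun j => f j ^ 2) i = ∑ j ∈ W, ∑ k ∈ W, f j * f k *
      (if j = k then (((i : ℂ) - j)⁻¹) ^ 2 else 0) := by
    simp only [K]
    refine sum_congr rfl fun j hj => ?_
    simp only [mul_ite, mul_zero, sum_ite_eq, hj, if_true]; ring
  have e5 : f i * K W f i = ∑ j ∈ W, ∑ k ∈ W, f j * f k *
      (if j = i then (((i : ℂ) - k)⁻¹) ^ 2 else 0) := by
    rw [sum_comm]
    simp only [K, mul_sum]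
    refine sum_congr rfl fun j hj => ?_
    simp [hi]; ring
  have e6 : f i * K W f i = ∑ j ∈ W, ∑ k ∈ W, f j * f k *
      (if k = i then (((i : ℂ) - j)⁻¹) ^ 2 else 0) := by
    simp only [K, mul_sum]
    refine sum_congr rfl fun j hj => ?_
    simp [hi]; ring
  have : (H W f i) ^ 2 = H W (fun j => f j * H W f j) i + H W (fun j => f j * H W f j) i
      + K W (fun j => f j ^ 2) i + f i * K W f i + f i * K W f i := by
    rw [e1]
    nth_rewrite 1 [e2]
    rw [e3, e4]
    nth_rewrite 1 [e5]
    rw [e6]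
    simp only [← sum_add_distrib, ← mul_add]
    refine sum_congr rfl fun j _ => sum_congr rfl fun k _ => ?_
    rw [kernel_id]
  rw [this]; ring

lemma κ_summable : Summable fun m : ℤ => ((m : ℝ)⁻¹) ^ 2 := by
  have := Real.summable_one_div_int_pow (p := 2) |>.2 (by norm_num)
  simpa using this

lemma κ_nonneg : 0 ≤ κ := tsum_nonneg fun m => by positivity

lemma sum_le_κ (W : Finset ℤ) (i : ℤ) : ∑ j ∈ W, (((i : ℝ) - j)⁻¹) ^ 2 ≤ κ := by
  have inj : Function.Injective fun j : ℤ => i - j := fun a b h => by simpa using h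
  have : ∑ j ∈ W, (((i : ℝ) - j)⁻¹) ^ 2 = ∑ m ∈ W.map ⟨_, inj⟩, ((m : ℝ)⁻¹) ^ 2 := by
    simp
  rw [this]
  exact κ_summable.sum_le_tsum _ fun m _ => by positivity

lemma sum_le_κ' (W : Finset ℤ) (j : ℤ) : ∑ i ∈ W, (((i : ℝ) - j)⁻¹) ^ 2 ≤ κ := by
  refine le_trans (le_of_eq ?_) (sum_le_κ W j)
  refine sum_congr rfl fun i _ => ?_
  rw [← neg_sub, inv_neg]; ring

/-- `ℓ_r` norm -/
noncomputable def L (W : Finset ℤ) (r : ℝ) (f : ℤ → ℂ) : ℝ := (∑ i ∈ W, ‖f i‖ ^ r) ^ (1 / r)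

lemma L_nonneg (W r f) : 0 ≤ L W r f :=
  Real.rpow_nonneg (sum_nonneg fun i _ => Real.rpow_nonneg (norm_nonneg _) _) _

lemma L_mono {W r} (hr : 1 ≤ r) {f g : ℤ → ℂ} (h : ∀ i ∈ W, ‖f i‖ ≤ ‖g i‖) : L W r f ≤ L W r g := by
  have : 0 ≤ r := by linarith
  refine Real.rpow_le_rpow (sum_nonneg fun i _ => Real.rpow_nonneg (norm_nonneg _) _) ?_ (by positivity)
  exact sum_le_sum fun i hi => Real.rpow_le_rpow (norm_nonneg _) (h i hi) this

lemma L_congr {W r} {f g : ℤ → ℂ} (h : ∀ i ∈ W, ‖f i‖ = ‖g i‖) : L W r f = L W r g := by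
  unfold L
  rw [sum_congr rfl fun i hi => by rw [h i hi]]

lemma L_add {W r} (hr : 1 ≤ r) (f g : ℤ → ℂ) : L W r (fun i => f i + g i) ≤ L W r f + L W r g := by
  have := Real.Lp_add_le_of_nonneg W hr (f := fun i => ‖f i‖) (g := fun i => ‖g i‖)
    (fun i _ => norm_nonneg _) (fun i _ => norm_nonneg _)
  refine le_trans ?_ this
  have : 0 ≤ r := by linarith
  refine Real.rpow_le_rpow (sum_nonneg fun i _ => Real.rpow_nonneg (norm_nonneg _) _) ?_ (by positivity)
  exact sum_le_sum fun i hi => Real.rpow_le_rpow (norm_nonneg _) (norm_add_le _ _) this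

lemma L_smul {W r} (hr : 1 ≤ r) (c : ℂ) (f : ℤ → ℂ) :
    L W r (fun i => c * f i) = ‖c‖ * L W r f := by
  unfold L
  have h0 : r ≠ 0 := by linarith
  simp only [norm_mul]
  simp_rw [Real.mul_rpow (norm_nonneg _) (norm_nonneg _), ← mul_sum]
  rw [Real.mul_rpow (by positivity) (sum_nonneg fun i _ => Real.rpow_nonneg (norm_nonneg _) _),
    ← Real.rpow_mul (norm_nonneg _), mul_one_div_cancel h0, Real.rpow_one]

lemma L_rpow {W r} (hr : 1 ≤ r) (f : ℤ → ℂ) : L W r f ^ r = ∑ i ∈ W, ‖f i‖ ^ r := by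
  have h0 : r ≠ 0 := by linarith
  unfold L
  rw [← Real.rpow_mul (sum_nonneg fun i _ => Real.rpow_nonneg (norm_nonneg _) _),
    one_div_mul_cancel h0, Real.rpow_one]

lemma le_of_rpow {r a b : ℝ} (hr : 1 ≤ r) (hb : 0 ≤ b) (h : a ^ r ≤ b ^ r) : a ≤ b := by
  by_contra hh
  push Not at hh
  have := Real.rpow_lt_rpow hb hh (by linarith : 0 < r)
  linarith

lemma L_sq {W r} (f : ℤ → ℂ) (hr : 1 ≤ r) : L W r (fun i => f i ^ 2) = L W (2 * r) f ^ 2 := by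
  unfold L
  rw [← Real.rpow_natCast, ← Real.rpow_mul (sum_nonneg fun i _ => Real.rpow_nonneg (norm_nonneg _) _)]
  congr 1
  · refine sum_congr rfl fun i _ => ?_
    rw [norm_pow, ← Real.rpow_natCast, ← Real.rpow_mul (norm_nonneg _)]
    norm_num
  · push_cast; field_simp

lemma L_mul {W r} (f g : ℤ → ℂ) (hr : 1 ≤ r) :
    L W r (fun i => f i * g i) ≤ L W (2 * r) f * L W (2 * r) g := by
  have h0 : r ≠ 0 := by linarith
  have key : ∑ i ∈ W, ‖f i * g i‖ ^ r ≤
      (∑ i ∈ W, ‖f i‖ ^ (2 * r)) ^ (1 / (2:ℝ)) * (∑ i ∈ W, ‖g i‖ ^ (2 * r)) ^ (1 / (2:ℝ)) := by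
    have := Real.inner_le_Lp_mul_Lq_of_nonneg W (f := fun i => ‖f i‖ ^ r) (g := fun i => ‖g i‖ ^ r)
      (p := 2) (q := 2) Real.HolderConjugate.two_two
      (fun i _ => Real.rpow_nonneg (norm_nonneg _) _) (fun i _ => Real.rpow_nonneg (norm_nonneg _) _)
    simp_rw [← Real.rpow_mul (norm_nonneg _), ← Real.mul_rpow (norm_nonneg _) (norm_nonneg _),
      ← norm_mul, mul_comm r 2] at this
    exact this
  have nn : ∀ f : ℤ → ℂ, ∀ s : ℝ, 0 ≤ ∑ i ∈ W, ‖f i‖ ^ s := fun f s =>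
    sum_nonneg fun i _ => Real.rpow_nonneg (norm_nonneg _) _
  refine le_of_rpow hr (mul_nonneg (L_nonneg _ _ _) (L_nonneg _ _ _)) ?_
  rw [L_rpow hr, Real.mul_rpow (L_nonneg _ _ _) (L_nonneg _ _ _)]
  unfold L
  rw [← Real.rpow_mul (nn _ _), ← Real.rpow_mul (nn _ _)]
  have : 1 / (2 * r) * r = 1 / 2 := by field_simp
  rw [this]
  exact key

lemma norm_K_le (W : Finset ℤ) (f : ℤ → ℂ) (i : ℤ) :
    ‖K W f i‖ ≤ ∑ j ∈ W, (((i : ℝ) - j)⁻¹) ^ 2 * ‖f j‖ := by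
  refine (norm_sum_le _ _).trans (le_of_eq (sum_congr rfl fun j _ => ?_))
  rw [norm_mul, mul_comm, norm_pow, norm_inv]
  have : ((i : ℂ) - j) = (((i - j : ℤ) : ℝ) : ℂ) := by push_cast; rfl
  rw [this, Complex.norm_real]
  congr 1
  push_cast
  rw [Real.norm_eq_abs, inv_pow, sq_abs, inv_pow]

lemma L_K {W r} (hr : 1 ≤ r) (f : ℤ → ℂ) : L W r (K W f) ≤ κ * L W r f := by
  have h0 : r ≠ 0 := by linarith
  have nn : ∀ i, 0 ≤ ∑ j ∈ W, (((i : ℝ) - j)⁻¹) ^ 2 * ‖f j‖ ^ r := fun i =>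
    sum_nonneg fun j _ => mul_nonneg (by positivity) (Real.rpow_nonneg (norm_nonneg _) _)
  have pt : ∀ i : ℤ, ‖K W f i‖ ^ r ≤ κ ^ (r - 1) * ∑ j ∈ W, (((i : ℝ) - j)⁻¹) ^ 2 * ‖f j‖ ^ r := by
    intro i
    have h1 := (norm_K_le W f i).trans (Real.inner_le_weight_mul_Lp_of_nonneg W hr
      (fun j : ℤ => (((i : ℝ) - j)⁻¹) ^ 2) (fun j => ‖f j‖) (fun j => by positivity)
      (fun j => norm_nonneg _))
    have h2 := Real.rpow_le_rpow (norm_nonneg _) h1 (by linarith : 0 ≤ r)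
    have s0 : 0 ≤ ∑ j ∈ W, (((i : ℝ) - j)⁻¹) ^ 2 := sum_nonneg fun j _ => by positivity
    rw [Real.mul_rpow (Real.rpow_nonneg s0 _) (Real.rpow_nonneg (nn i) _),
      ← Real.rpow_mul s0, ← Real.rpow_mul (nn i), inv_mul_cancel₀ h0, Real.rpow_one] at h2
    have h3 : (1 - r⁻¹) * r = r - 1 := by field_simp
    rw [h3] at h2
    refine h2.trans (mul_le_mul_of_nonneg_right ?_ (nn i))
    exact Real.rpow_le_rpow s0 (sum_le_κ W i) (by linarith)
  refine le_of_rpow hr (mul_nonneg κ_nonneg (L_nonneg _ _ _)) ?_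
  rw [L_rpow hr, Real.mul_rpow κ_nonneg (L_nonneg _ _ _), L_rpow hr]
  calc ∑ i ∈ W, ‖K W f i‖ ^ r
      ≤ ∑ i ∈ W, κ ^ (r - 1) * ∑ j ∈ W, (((i : ℝ) - j)⁻¹) ^ 2 * ‖f j‖ ^ r := sum_le_sum fun i _ => pt i
    _ = κ ^ (r - 1) * ∑ j ∈ W, (∑ i ∈ W, (((i : ℝ) - j)⁻¹) ^ 2) * ‖f j‖ ^ r := by
        rw [← mul_sum, sum_comm]; simp only [sum_mul]
    _ ≤ κ ^ (r - 1) * ∑ j ∈ W, κ * ‖f j‖ ^ r := by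
        refine mul_le_mul_of_nonneg_left (sum_le_sum fun j _ => ?_) (Real.rpow_nonneg κ_nonneg _)
        exact mul_le_mul_of_nonneg_right (sum_le_κ' W j) (Real.rpow_nonneg (norm_nonneg _) _)
    _ = κ ^ r * ∑ j ∈ W, ‖f j‖ ^ r := by
        rw [← mul_sum, ← mul_assoc, ← Real.rpow_add_one' κ_nonneg (by simpa using h0)]
        simp

def Bd (r N : ℝ) : Prop := ∀ (W : Finset ℤ) (f : ℤ → ℂ), L W r (H W f) ≤ N * L W r f

lemma doubling {r N : ℝ} (hr : 1 ≤ r) (hN : 0 ≤ N) (h : Bd r N) : Bd (2 * r) (2 * N + 3 * κ + 1) := by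
  intro W f
  set a := L W (2 * r) f
  set b := L W (2 * r) (H W f)
  have ha : 0 ≤ a := L_nonneg _ _ _
  have hb : 0 ≤ b := L_nonneg _ _ _
  have hκ := κ_nonneg
  have h1 : b ^ 2 ≤ 2 * (N * (a * b)) + κ * a ^ 2 + 2 * (a * (κ * a)) := by
    have e : b ^ 2 = L W r (fun i => (2 * H W (fun j => f j * H W f j) i + K W (fun j => f j ^ 2) i)
      + 2 * (f i * K W f i)) := by
      rw [← L_sq _ hr]
      exact L_congr fun i hi => by rw [cotlar W f hi]
    rw [e]
    refine (L_add hr _ _).trans (add_le_add ((L_add hr _ _).trans (add_le_add ?_ ?_)) ?_)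
    · rw [L_smul hr]
      simp only [Complex.norm_ofNat]
      refine mul_le_mul_of_nonneg_left ((h W _).trans ?_) (by norm_num)
      exact mul_le_mul_of_nonneg_left (L_mul _ _ hr) hN
    · refine (L_K hr _).trans ?_
      rw [L_sq _ hr]
    · rw [L_smul hr]
      simp only [Complex.norm_ofNat]
      refine mul_le_mul_of_nonneg_left ((L_mul _ _ hr).trans ?_) (by norm_num)
      exact mul_le_mul_of_nonneg_left (L_K (by linarith) _) ha
  by_contra hh
  push Not at hh
  have hab : a ≤ b := by nlinarith [mul_nonneg hN ha, mul_nonneg hκ ha]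
  have hbpos : 0 < b := lt_of_le_of_lt (by positivity) hh
  have h2 := mul_lt_mul_of_pos_right hh hbpos
  have h3 : a * a ≤ a * b := mul_le_mul_of_nonneg_left hab ha
  have h4 : κ * (a * a) ≤ κ * (a * b) := mul_le_mul_of_nonneg_left h3 hκ
  nlinarith [mul_nonneg ha hb]

end TriTrunc

namespace TriTrunc
open Finset

lemma sum_sym_succ (φ : ℤ → ℝ) (M : ℕ) :
    ∑ i ∈ Icc (-((M + 1 : ℕ) : ℤ)) ((M + 1 : ℕ) : ℤ), φ i =
      φ (-(M + 1 : ℤ)) + (φ (M + 1 : ℤ) + ∑ i ∈ Icc (-(M : ℤ)) M, φ i) := by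
  have : Icc (-((M + 1 : ℕ) : ℤ)) ((M + 1 : ℕ) : ℤ) =
      insert (-(M + 1 : ℤ)) (insert (M + 1 : ℤ) (Icc (-(M : ℤ)) M)) := by
    ext x; simp only [mem_Icc, mem_insert]; omega
  rw [this, sum_insert, sum_insert]
  · simp only [mem_Icc]; omega
  · simp only [mem_Icc, mem_insert]; omega

lemma sum_tele (φ : ℤ → ℝ) (M : ℕ) :
    ∑ i ∈ Icc (-(M : ℤ)) M, (φ (i - 1) - φ i) = φ (-(M : ℤ) - 1) - φ M := by
  induction M with
  | zero => simp
  | succ M ih =>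
    rw [sum_sym_succ, ih]
    push_cast
    have e1 : (-1 + -(M : ℤ)) = -(M : ℤ) - 1 := by ring
    have e2 : (M : ℤ) + 1 - 1 = M := by ring
    simp only [neg_add_rev, e1, e2]
    ring

lemma sum_zero (M : ℕ) : ∑ i ∈ Icc (-(M : ℤ)) M, ((i : ℝ))⁻¹ = 0 := by
  induction M with
  | zero => simp
  | succ M ih =>
    rw [sum_sym_succ, ih]
    push_cast
    rw [inv_neg]; ring

open Filter Topology in
lemma D_step (j : ℤ) : Tendsto (fun M : ℕ => ∑ i ∈ Icc (-(M : ℤ)) M, ((i : ℝ) - ((j + 1 : ℤ) : ℝ))⁻¹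
    - ∑ i ∈ Icc (-(M : ℤ)) M, ((i : ℝ) - j)⁻¹) atTop (𝓝 0) := by
  have h : ∀ M : ℕ, ∑ i ∈ Icc (-(M : ℤ)) M, ((i : ℝ) - ((j + 1 : ℤ) : ℝ))⁻¹
      - ∑ i ∈ Icc (-(M : ℤ)) M, ((i : ℝ) - j)⁻¹ =
      -((M : ℝ) + (1 + j))⁻¹ - ((M : ℝ) + (-j))⁻¹ := by
    intro M
    rw [← sum_sub_distrib]
    have := sum_tele (fun i : ℤ => ((i : ℝ) - j)⁻¹) M
    push_cast at this ⊢
    have e : ∀ x : ℤ, (x : ℝ) - (j + 1) = x - 1 - j := fun x => by ring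
    simp only [e]
    rw [this, ← inv_neg]
    congr 1
    congr 1
    ring
  simp only [h]
  have t : ∀ c : ℝ, Tendsto (fun M : ℕ => ((M : ℝ) + c)⁻¹) atTop (𝓝 0) := fun c =>
    tendsto_inv_atTop_zero.comp (tendsto_atTop_add_const_right _ c tendsto_natCast_atTop_atTop)
  simpa using (t (1 + j)).neg.sub (t (-j))

open Filter Topology in
lemma D_tendsto (j : ℤ) :
    Tendsto (fun M : ℕ => ∑ i ∈ Icc (-(M : ℤ)) M, ((i : ℝ) - j)⁻¹) atTop (𝓝 0) := by
  induction j using Int.induction_on with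
  | zero => simp [sum_zero]
  | succ j ih =>
    have := (D_step j).add ih
    simpa using this
  | pred j ih =>
    have := ih.sub (D_step (-(j : ℤ) - 1))
    simp only [sub_add_cancel, sub_sub_cancel, sub_zero] at this
    exact this

noncomputable def Hr (W : Finset ℤ) (f : ℤ → ℝ) (i : ℤ) : ℝ := ∑ j ∈ W, f j * ((i : ℝ) - j)⁻¹
noncomputable def Kr (W : Finset ℤ) (f : ℤ → ℝ) (i : ℤ) : ℝ := ∑ j ∈ W, f j * (((i : ℝ) - j)⁻¹) ^ 2

lemma H_ofReal (W f i) : H W (fun j => (f j : ℂ)) i = (Hr W f i : ℂ) := by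
  simp [H, Hr]
lemma K_ofReal (W f i) : K W (fun j => (f j : ℂ)) i = (Kr W f i : ℂ) := by
  simp [K, Kr]

lemma cotlar_real (W : Finset ℤ) (f : ℤ → ℝ) {i : ℤ} (hi : i ∈ W) :
    (Hr W f i) ^ 2 = 2 * Hr W (fun j => f j * Hr W f j) i + Kr W (fun j => f j ^ 2) i
      + 2 * (f i * Kr W f i) := by
  have := cotlar W (fun j => (f j : ℂ)) hi
  simp only [H_ofReal, K_ofReal, ← Complex.ofReal_mul, ← Complex.ofReal_pow] at this
  exact_mod_cast this

lemma sum_Kr_sq (W : Finset ℤ) (f : ℤ → ℝ) (hf : ∀ j, 0 ≤ f j) :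
    ∑ i ∈ W, Kr W f i ≤ κ * ∑ i ∈ W, f i := by
  unfold Kr
  rw [sum_comm, mul_sum]
  refine sum_le_sum fun j _ => ?_
  rw [← mul_sum, mul_comm]
  exact mul_le_mul_of_nonneg_right (sum_le_κ' W j) (hf j)

lemma sum_mul_Kr (W : Finset ℤ) (f : ℤ → ℝ) :
    ∑ i ∈ W, f i * Kr W f i ≤ κ * ∑ i ∈ W, f i ^ 2 := by
  have h1 : ∀ i ∈ W, f i * Kr W f i ≤
      f i ^ 2 / 2 * ∑ j ∈ W, (((i : ℝ) - j)⁻¹) ^ 2 + Kr W (fun j => f j ^ 2) i / 2 := by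
    intro i _
    unfold Kr
    rw [mul_sum, mul_sum, sum_div, ← sum_add_distrib]
    refine sum_le_sum fun j _ => ?_
    nlinarith [sq_nonneg (((i : ℝ) - j)⁻¹ * (f i - f j))]
  refine (sum_le_sum h1).trans ?_
  rw [sum_add_distrib, ← sum_div]
  have h2 := sum_Kr_sq W (fun j => f j ^ 2) (fun j => sq_nonneg _)
  have h3 : ∑ i ∈ W, f i ^ 2 / 2 * ∑ j ∈ W, (((i : ℝ) - j)⁻¹) ^ 2 ≤ ∑ i ∈ W, f i ^ 2 / 2 * κ :=
    sum_le_sum fun i _ => mul_le_mul_of_nonneg_left (sum_le_κ W i) (by positivity)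
  rw [← sum_mul, ← sum_div] at h3
  linarith

lemma base_real (W : Finset ℤ) (f : ℤ → ℝ) :
    ∑ i ∈ W, (Hr W f i) ^ 2 ≤ (1 + 6 * κ) * ∑ i ∈ W, f i ^ 2 := by
  classical
  -- choose the window
  have ev1 : ∀ᶠ M : ℕ in Filter.atTop, ∀ j ∈ W,
      |∑ i ∈ Icc (-(M : ℤ)) M, ((i : ℝ) - j)⁻¹| ≤ 1 / 2 := by
    rw [Filter.eventually_all_finset]
    intro j _
    have := (D_tendsto j).abs
    rw [abs_zero] at this
    exact this.eventually_le_const (by norm_num)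
  have ev2 : ∀ᶠ M : ℕ in Filter.atTop, ∀ j ∈ W, j ∈ Icc (-(M : ℤ)) M := by
    rw [Filter.eventually_all_finset]
    intro j _
    filter_upwards [Filter.eventually_ge_atTop j.natAbs] with M hM
    simp only [mem_Icc]; omega
  obtain ⟨M, hM1, hM2⟩ := (ev1.and ev2).exists
  set V := Icc (-(M : ℤ)) (M : ℤ) with hV
  set g : ℤ → ℝ := fun j => if j ∈ W then f j else 0 with hg
  have sub : W ⊆ V := hM2
  have hH : ∀ i, Hr V g i = Hr W f i := by
    intro i
    unfold Hr
    rw [← sum_subset sub]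
    · exact sum_congr rfl fun j hj => by simp [hg, hj]
    · intro j _ hj; simp [hg, hj]
  have hs : ∑ i ∈ V, g i ^ 2 = ∑ i ∈ W, f i ^ 2 := by
    rw [← sum_subset sub]
    · exact sum_congr rfl fun j hj => by simp [hg, hj]
    · intro j _ hj; simp [hg, hj]
  have hmono : ∑ i ∈ W, (Hr W f i) ^ 2 ≤ ∑ i ∈ V, (Hr V g i) ^ 2 := by
    simp only [hH]
    exact sum_le_sum_of_subset_of_nonneg sub fun i _ _ => sq_nonneg _
  refine hmono.trans ?_
  rw [← hs]
  have e : ∑ i ∈ V, (Hr V g i) ^ 2 = 2 * ∑ i ∈ V, Hr V (fun j => g j * Hr V g j) i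
      + ∑ i ∈ V, Kr V (fun j => g j ^ 2) i + 2 * ∑ i ∈ V, g i * Kr V g i := by
    rw [mul_sum, mul_sum, ← sum_add_distrib, ← sum_add_distrib]
    exact sum_congr rfl fun i hi => cotlar_real V g hi
  have h1 : ∑ i ∈ V, Hr V (fun j => g j * Hr V g j) i ≤
      ∑ i ∈ V, (g i ^ 2 / 4 + (Hr V g i) ^ 2 / 4) := by
    conv_lhs => unfold Hr
    rw [sum_comm]
    refine sum_le_sum fun j _ => ?_
    rw [← mul_sum]
    change g j * Hr V g j * _ ≤ _
    by_cases hj : j ∈ W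
    · have hD := hM1 j hj
      have : |g j * Hr V g j * ∑ i ∈ V, ((i : ℝ) - j)⁻¹| ≤ |g j * Hr V g j| * (1 / 2) := by
        rw [abs_mul]; exact mul_le_mul_of_nonneg_left hD (abs_nonneg _)
      have h2 := (le_abs_self _).trans this
      rw [abs_mul] at h2
      nlinarith [sq_nonneg (|g j| - |Hr V g j|), sq_abs (g j), sq_abs (Hr V g j)]
    · have : g j = 0 := by simp [hg, hj]
      rw [this]; nlinarith [sq_nonneg (Hr V g j)]
  rw [sum_add_distrib, ← sum_div, ← sum_div] at h1
  have h2 := sum_Kr_sq V (fun j => g j ^ 2) (fun j => sq_nonneg _)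
  have h3 := sum_mul_Kr V g
  linarith

lemma base : ∃ N, 0 ≤ N ∧ Bd 2 N := by
  refine ⟨Real.sqrt (1 + 6 * κ), Real.sqrt_nonneg _, fun W f => ?_⟩
  have hκ := κ_nonneg
  have nsq : ∀ z : ℂ, ‖z‖ ^ 2 = z.re ^ 2 + z.im ^ 2 := fun z => by
    rw [← Complex.normSq_eq_norm_sq, Complex.normSq_apply]; ring
  have hk : ∀ i j : ℤ, ((i : ℂ) - j)⁻¹ = ((((i : ℝ) - j)⁻¹ : ℝ) : ℂ) := fun i j => by push_cast; rfl
  have hre : ∀ i, (H W f i).re = Hr W (fun j => (f j).re) i := fun i => by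
    simp only [H, Hr, Complex.re_sum, hk, Complex.re_mul_ofReal]
  have him : ∀ i, (H W f i).im = Hr W (fun j => (f j).im) i := fun i => by
    simp only [H, Hr, Complex.im_sum, hk, Complex.im_mul_ofReal]
  refine le_of_rpow (r := 2) (by norm_num) (mul_nonneg (Real.sqrt_nonneg _) (L_nonneg _ _ _)) ?_
  rw [Real.mul_rpow (Real.sqrt_nonneg _) (L_nonneg _ _ _), L_rpow (by norm_num), L_rpow (by norm_num)]
  simp only [Real.rpow_two, nsq, hre, him]
  rw [Real.sq_sqrt (by positivity), sum_add_distrib, sum_add_distrib]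
  have := base_real W (fun j => (f j).re)
  have := base_real W (fun j => (f j).im)
  linarith

lemma pow_two_bd (k : ℕ) : ∃ N, 0 ≤ N ∧ Bd (2 ^ (k + 1)) N := by
  induction k with
  | zero => simpa using base
  | succ k ih =>
    obtain ⟨N, hN, h⟩ := ih
    refine ⟨2 * N + 3 * κ + 1, by have := κ_nonneg; positivity, ?_⟩
    have := doubling (one_le_pow₀ (by norm_num)) hN h
    rwa [← pow_succ'] at this

end TriTrunc

namespace TriTrunc
open Finset

noncomputable def BF (W : Finset ℤ) (f g : ℤ → ℂ) : ℂ := ∑ i ∈ W, g i * H W f i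

lemma BF_antisymm (W f g) : BF W f g = - BF W g f := by
  unfold BF H
  simp only [mul_sum]
  rw [sum_comm, ← sum_neg_distrib]
  refine sum_congr rfl fun j _ => ?_
  rw [← sum_neg_distrib]
  refine sum_congr rfl fun i _ => ?_
  have : ((i : ℂ) - j)⁻¹ = -((j : ℂ) - i)⁻¹ := by rw [← inv_neg, neg_sub]
  rw [this]; ring

lemma BF_le {p q N : ℝ} (hpq : p.HolderConjugate q) (h : Bd p N) (W f g) :
    ‖BF W f g‖ ≤ N * (L W p f * L W q g) := by
  have h1 : ‖BF W f g‖ ≤ ∑ i ∈ W, ‖H W f i‖ * ‖g i‖ :=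
    (norm_sum_le _ _).trans (le_of_eq (sum_congr rfl fun i _ => by rw [norm_mul, mul_comm]))
  have h2 := Real.inner_le_Lp_mul_Lq_of_nonneg W hpq (f := fun i => ‖H W f i‖) (g := fun i => ‖g i‖)
    (fun i _ => norm_nonneg _) (fun i _ => norm_nonneg _)
  refine h1.trans (h2.trans ?_)
  change L W p (H W f) * L W q g ≤ _
  rw [← mul_assoc]
  exact mul_le_mul_of_nonneg_right (h W f) (L_nonneg _ _ _)

lemma BF_le' {p q N : ℝ} (hpq : p.HolderConjugate q) (h : Bd p N) (W f g) :
    ‖BF W f g‖ ≤ N * (L W q f * L W p g) := by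
  rw [BF_antisymm, norm_neg, mul_comm (L W q f)]
  exact BF_le hpq h W g f

/-- complex power of a complex number, keeping the argument -/
noncomputable def P (w c : ℂ) : ℂ := c / ‖c‖ * Complex.exp (w * Real.log ‖c‖)

lemma P_one (c : ℂ) : P 1 c = c := by
  unfold P
  by_cases h : c = 0
  · simp [h]
  · have : 0 < ‖c‖ := norm_pos_iff.2 h
    rw [one_mul, ← Complex.ofReal_exp, Real.exp_log this, div_mul_cancel₀]
    exact_mod_cast this.ne'

lemma norm_P {w : ℂ} (hw : 0 < w.re) (c : ℂ) : ‖P w c‖ = ‖c‖ ^ w.re := by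
  unfold P
  by_cases h : c = 0
  · simp [h, Real.zero_rpow hw.ne']
  · have : 0 < ‖c‖ := norm_pos_iff.2 h
    rw [norm_mul, norm_div, Complex.norm_real, norm_norm, div_self this.ne', one_mul,
      Complex.norm_exp, Complex.re_mul_ofReal, Real.rpow_def_of_pos this, mul_comm]

lemma P_diff (c : ℂ) : Differentiable ℂ fun w => P w c := by
  unfold P; fun_prop

lemma L_P {W : Finset ℤ} {r p : ℝ} {z : ℂ} (hr : 0 < r) (hp : 0 < p) (hz : z.re = 1 / p)
    {f : ℤ → ℂ} (hf : ∑ i ∈ W, ‖f i‖ ^ r ≤ 1) : L W p (fun j => P (r * z) (f j)) ≤ 1 := by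
  unfold L
  have hre : ((r : ℂ) * z).re = r * (1 / p) := by rw [Complex.re_ofReal_mul, hz]
  have hpos : 0 < ((r : ℂ) * z).re := by rw [hre]; positivity
  refine Real.rpow_le_one (sum_nonneg fun i _ => Real.rpow_nonneg (norm_nonneg _) _) ?_ (by positivity)
  refine le_trans (le_of_eq (sum_congr rfl fun i _ => ?_)) hf
  rw [norm_P hpos, hre, ← Real.rpow_mul (norm_nonneg _)]
  congr 1
  field_simp

lemma P_le_one {W : Finset ℤ} {r : ℝ} {w : ℂ} (hr : 0 < r) (hw : 0 < w.re)
    {f : ℤ → ℂ} (hf : ∑ i ∈ W, ‖f i‖ ^ r ≤ 1) {i : ℤ} (hi : i ∈ W) : ‖P w (f i)‖ ≤ 1 := by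
  rw [norm_P hw]
  refine Real.rpow_le_one (norm_nonneg _) ?_ hw.le
  by_contra hh
  push Not at hh
  have h1 := Real.one_lt_rpow hh hr
  have h2 := single_le_sum (f := fun i => ‖f i‖ ^ r)
    (fun i _ => Real.rpow_nonneg (norm_nonneg _) _) hi
  linarith

lemma interp {R R' r r' N : ℝ} (hR : R.HolderConjugate R') (hr : r.HolderConjugate r')
    (hN : 0 < N) (h2 : 2 < R) (h : Bd R N) (hr1 : r ≤ R) (hr2 : r' ≤ R)
    (W : Finset ℤ) (f g : ℤ → ℂ)
    (hf : ∑ i ∈ W, ‖f i‖ ^ r ≤ 1) (hg : ∑ i ∈ W, ‖g i‖ ^ r' ≤ 1) : ‖BF W f g‖ ≤ N := by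
  have hRp := hR.pos
  have hRp' := hR.symm.pos
  have hrp := hr.pos
  have hrp' := hr.symm.pos
  have cR : R⁻¹ + R'⁻¹ = 1 := hR.inv_add_inv_eq_one
  have cr : r⁻¹ + r'⁻¹ = 1 := hr.inv_add_inv_eq_one
  set F : ℂ → ℂ := fun z => BF W (fun j => P (r * z) (f j)) (fun i => P (r' * (1 - z)) (g i)) with hF
  have hlu : R⁻¹ < R'⁻¹ := by
    have : R⁻¹ < 2⁻¹ := inv_strictAnti₀ (by norm_num) h2
    norm_num at this ⊢
    linarith
  have hl0 : 0 < R⁻¹ := inv_pos.2 hRp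
  have hz0 : F ((r⁻¹ : ℝ) : ℂ) = BF W f g := by
    have e1 : (r : ℂ) * ((r⁻¹ : ℝ) : ℂ) = 1 := by
      rw [← Complex.ofReal_mul, mul_inv_cancel₀ hrp.ne', Complex.ofReal_one]
    have e2 : (r' : ℂ) * (1 - ((r⁻¹ : ℝ) : ℂ)) = 1 := by
      have : 1 - r⁻¹ = r'⁻¹ := by linarith
      rw [← Complex.ofReal_one, ← Complex.ofReal_sub, ← Complex.ofReal_mul, this,
        mul_inv_cancel₀ hrp'.ne']
    simp only [hF, e1, e2, P_one]
  have hd : Differentiable ℂ F := by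
    simp only [hF, BF, H]
    have d1 : ∀ j, Differentiable ℂ fun z : ℂ => P (r * z) (f j) := fun j =>
      (P_diff (f j)).comp (by fun_prop : Differentiable ℂ fun z : ℂ => (r : ℂ) * z)
    have d2 : ∀ j, Differentiable ℂ fun z : ℂ => P (r' * (1 - z)) (g j) := fun j =>
      (P_diff (g j)).comp (by fun_prop : Differentiable ℂ fun z : ℂ => (r' : ℂ) * (1 - z))
    refine Differentiable.fun_sum fun i _ => (d2 i).mul (Differentiable.fun_sum fun j _ =>
      (d1 j).mul_const _)
  have hre1 : ∀ z : ℂ, ((r : ℂ) * z).re = r * z.re := fun z => Complex.re_ofReal_mul _ _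
  have hre2 : ∀ z : ℂ, ((r' : ℂ) * (1 - z)).re = r' * (1 - z.re) := fun z => by
    rw [Complex.re_ofReal_mul]; simp
  have hB : BddAbove ((norm ∘ F) '' Complex.HadamardThreeLines.verticalClosedStrip R⁻¹ R'⁻¹) := by
    refine ⟨∑ i ∈ W, ∑ j ∈ W, ‖((i : ℂ) - j)⁻¹‖, ?_⟩
    rintro _ ⟨z, hz, rfl⟩
    simp only [Complex.HadamardThreeLines.verticalClosedStrip, Set.mem_preimage, Set.mem_Icc] at hz
    have p1 : 0 < ((r : ℂ) * z).re := by rw [hre1]; exact mul_pos hrp (by linarith)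
    have p2 : 0 < ((r' : ℂ) * (1 - z)).re := by rw [hre2]; exact mul_pos hrp' (by linarith)
    simp only [Function.comp, hF, BF, H]
    refine (norm_sum_le _ _).trans (sum_le_sum fun i hi => ?_)
    rw [norm_mul]
    refine (mul_le_of_le_one_left (norm_nonneg _) (P_le_one hrp' p2 hg hi)).trans ?_
    refine (norm_sum_le _ _).trans (sum_le_sum fun j hj => ?_)
    rw [norm_mul]
    exact mul_le_of_le_one_left (norm_nonneg _) (P_le_one hrp p1 hf hj)
  have key : ∀ a b c : ℝ, 0 ≤ b → a ≤ 1 → b ≤ 1 → N * (a * b) ≤ N := fun a b c h1 h2 h3 => by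
    have : a * b ≤ 1 := mul_le_one₀ h2 h1 h3
    nlinarith
  have ha : ∀ z ∈ Complex.re ⁻¹' {R⁻¹}, ‖F z‖ ≤ N := by
    intro z hz
    have hz : z.re = R⁻¹ := hz
    refine (BF_le hR h W _ _).trans (key _ _ 0 (L_nonneg _ _ _) ?_ ?_)
    · exact L_P hrp hRp (by rw [hz, one_div]) hf
    · exact L_P hrp' hRp' (by simp [hz]; linarith) hg
  have hb : ∀ z ∈ Complex.re ⁻¹' {R'⁻¹}, ‖F z‖ ≤ N := by
    intro z hz
    have hz : z.re = R'⁻¹ := hz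
    refine (BF_le' hR h W _ _).trans (key _ _ 0 (L_nonneg _ _ _) ?_ ?_)
    · exact L_P hrp hRp' (by rw [hz, one_div]) hf
    · exact L_P hrp' hRp (by simp [hz]; linarith) hg
  have hmem : ((r⁻¹ : ℝ) : ℂ) ∈ Complex.HadamardThreeLines.verticalClosedStrip R⁻¹ R'⁻¹ := by
    simp only [Complex.HadamardThreeLines.verticalClosedStrip, Set.mem_preimage, Set.mem_Icc,
      Complex.ofReal_re]
    have i1 : R⁻¹ ≤ r⁻¹ := inv_anti₀ hrp hr1
    have i2 : R⁻¹ ≤ r'⁻¹ := inv_anti₀ hrp' hr2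
    constructor <;> linarith
  have := Complex.HadamardThreeLines.norm_le_interp_of_mem_verticalClosedStrip' hlu hmem
    hd.diffContOnCl hB ha hb
  rw [← Real.rpow_add hN, hz0] at this
  simpa using this

lemma bd_of_dual {r r' N : ℝ} (hr : r.HolderConjugate r') (hN : 0 ≤ N)
    (h : ∀ (W : Finset ℤ) (f g : ℤ → ℂ), ∑ i ∈ W, ‖f i‖ ^ r ≤ 1 → ∑ i ∈ W, ‖g i‖ ^ r' ≤ 1 →
      ‖BF W f g‖ ≤ N) : Bd r N := by
  have h1 : 1 ≤ r := hr.lt.le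
  have norm1 : ∀ (W : Finset ℤ) (f : ℤ → ℂ), ∑ i ∈ W, ‖f i‖ ^ r ≤ 1 → L W r (H W f) ≤ N := by
    intro W f hf
    obtain ⟨φ, hφ, e⟩ := (NNReal.isGreatest_Lp W (fun i => ‖H W f i‖₊) hr).1
    have hφ' : ∑ i ∈ W, φ i ^ r' ≤ 1 := hφ
    have e' := congrArg (fun x : NNReal => (x : ℝ)) e
    simp only [NNReal.coe_sum, NNReal.coe_mul, coe_nnnorm, NNReal.coe_rpow] at e'
    set g : ℤ → ℂ := fun i => (φ i : ℂ) * (starRingEnd ℂ (H W f i) / ‖H W f i‖) with hg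
    have hgφ : ∀ i, ‖g i‖ ≤ φ i := by
      intro i
      rw [hg]
      simp only [norm_mul, norm_div, Complex.norm_real, norm_norm, RCLike.norm_conj]
      have : ‖H W f i‖ / ‖H W f i‖ ≤ 1 := div_self_le_one _
      have h2 : ‖((φ i : ℝ))‖ = φ i := by simp
      rw [h2]
      exact mul_le_of_le_one_right (φ i).2 this
    have hg1 : ∑ i ∈ W, ‖g i‖ ^ r' ≤ 1 := by
      refine le_trans (sum_le_sum fun i _ => Real.rpow_le_rpow (norm_nonneg _) (hgφ i) hr.symm.nonneg) ?_
      exact_mod_cast hφ'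
    have hBF : BF W f g = ((∑ i ∈ W, ‖H W f i‖ * φ i : ℝ) : ℂ) := by
      unfold BF
      rw [Complex.ofReal_sum]
      refine sum_congr rfl fun i _ => ?_
      simp only [hg]
      by_cases h0 : H W f i = 0
      · simp [h0]
      · have hn : ((‖H W f i‖ : ℝ) : ℂ) ≠ 0 := by exact_mod_cast norm_ne_zero_iff.2 h0
        have := Complex.conj_mul' (H W f i)
        push_cast
        rw [mul_assoc, div_mul_eq_mul_div, this]
        field_simp
    have := h W f g hf hg1
    have nn : 0 ≤ ∑ i ∈ W, ‖H W f i‖ * (φ i : ℝ) :=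
      sum_nonneg fun i _ => mul_nonneg (norm_nonneg _) (φ i).2
    rw [hBF, Complex.norm_real, Real.norm_of_nonneg nn, e'] at this
    exact this
  intro W f
  by_cases h0 : L W r f = 0
  · have hz : ∀ i ∈ W, f i = 0 := by
      have h2 := L_rpow (W := W) h1 f
      rw [h0, Real.zero_rpow hr.ne_zero] at h2
      have h3 := (sum_eq_zero_iff_of_nonneg
        (fun i _ => Real.rpow_nonneg (norm_nonneg _) _)).1 h2.symm
      intro i hi
      have := (Real.rpow_eq_zero (norm_nonneg _) hr.ne_zero).1 (h3 i hi)
      exact norm_eq_zero.1 this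
    have hH : H W f = fun i => 0 * (0 : ℂ) := by
      funext i
      unfold H
      rw [sum_eq_zero fun j hj => by rw [hz j hj, zero_mul], zero_mul]
    rw [hH, L_smul h1 0 (fun _ => 0), h0]
    simp
  · have hpos : 0 < L W r f := lt_of_le_of_ne (L_nonneg _ _ _) (Ne.symm h0)
    set c : ℂ := (((L W r f)⁻¹ : ℝ) : ℂ) with hc
    have hcn : ‖c‖ = (L W r f)⁻¹ := by
      rw [hc, Complex.norm_real, Real.norm_of_nonneg (inv_nonneg.2 hpos.le)]
    have hcf : ∑ i ∈ W, ‖c * f i‖ ^ r ≤ 1 := by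
      rw [← L_rpow h1, L_smul h1, hcn, inv_mul_cancel₀ h0, Real.one_rpow]
    have h3 := norm1 W (fun i => c * f i) hcf
    have hH : H W (fun i => c * f i) = fun i => c * H W f i := by
      funext i
      simp only [H, mul_sum, mul_assoc]
    rw [hH, L_smul h1, hcn, inv_mul_le_iff₀ hpos, mul_comm] at h3
    exact h3

lemma riesz {r : ℝ} (hr : 1 < r) : ∃ N, 0 < N ∧ Bd r N := by
  have hc := Real.HolderConjugate.conjExponent hr
  obtain ⟨k, hk⟩ := pow_unbounded_of_one_lt (max r r.conjExponent) (by norm_num : (1 : ℝ) < 2)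
  obtain ⟨N, hN, hB⟩ := pow_two_bd (k + 1)
  have hk2 : (2 : ℝ) ^ k ≤ 2 ^ (k + 1 + 1) := pow_le_pow_right₀ (by norm_num) (by omega)
  have h1 : r ≤ 2 ^ (k + 1 + 1) := ((le_max_left _ _).trans hk.le).trans hk2
  have h2 : r.conjExponent ≤ 2 ^ (k + 1 + 1) := ((le_max_right _ _).trans hk.le).trans hk2
  have h3 : (2 : ℝ) < 2 ^ (k + 1 + 1) := by
    have : (1 : ℝ) ≤ 2 ^ k := one_le_pow₀ (by norm_num)
    rw [pow_add, pow_add]; linarith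
  have hB' : Bd (2 ^ (k + 1 + 1)) (N + 1) := fun W f => (hB W f).trans
    (mul_le_mul_of_nonneg_right (by linarith) (L_nonneg _ _ _))
  have hR := Real.HolderConjugate.conjExponent (show (1 : ℝ) < 2 ^ (k + 1 + 1) by linarith)
  exact ⟨N + 1, by linarith, bd_of_dual hc (by linarith) fun W f g hf hg =>
    interp hR hc (by linarith) h3 hB' h1 h2 W f g hf hg⟩

end TriTrunc

namespace TriTrunc
open Finset

lemma opNorm_le (p q : ℝ≥0∞) [Fact (1 ≤ p)] [Fact (1 ≤ q)] {n : ℕ}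
    (A : Matrix (Fin n) (Fin n) ℂ) {M : ℝ} (hM : 0 ≤ M)
    (h : ∀ v : Fin n → ℂ, ‖WithLp.toLp q (A.mulVec v)‖ ≤ M * ‖WithLp.toLp p v‖) :
    lpqOpNorm p q A ≤ M :=
  ContinuousLinearMap.opNorm_le_bound _ hM fun x => h x.ofLp

lemma le_opNorm (p q : ℝ≥0∞) [Fact (1 ≤ p)] [Fact (1 ≤ q)] {n : ℕ}
    (A : Matrix (Fin n) (Fin n) ℂ) (v : Fin n → ℂ) :
    ‖WithLp.toLp q (A.mulVec v)‖ ≤ lpqOpNorm p q A * ‖WithLp.toLp p v‖ :=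
  ContinuousLinearMap.le_opNorm (LinearMap.toContinuousLinearMap
    (((WithLp.linearEquiv q ℂ (∀ _ : Fin n, ℂ)).symm.toLinearMap.comp
      A.mulVecLin).comp
      (WithLp.linearEquiv p ℂ (∀ _ : Fin n, ℂ)).toLinearMap)) (WithLp.toLp p v)

/-- nesting of the finite-dimensional `ℓ_s` norms -/
lemma holder_nest (s t : ℝ≥0∞) [Fact (1 ≤ s)] [Fact (1 ≤ t)] (hst : s ≤ t) (hs : s ≠ ∞) {n : ℕ}
    (hn : 1 ≤ n) (v : Fin n → ℂ) :
    ‖WithLp.toLp s v‖ ≤ (n : ℝ) ^ (s⁻¹.toReal - t⁻¹.toReal) * ‖WithLp.toLp t v‖ := by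
  have hs1 : 1 ≤ s.toReal := by
    have := ENNReal.toReal_mono hs (Fact.out : 1 ≤ s)
    simpa using this
  have hs0 : 0 < s.toReal := by linarith
  have hn0 : (0 : ℝ) < n := by exact_mod_cast hn
  rw [PiLp.norm_eq_sum hs0, ENNReal.toReal_inv, ENNReal.toReal_inv]
  rcases eq_or_ne t ∞ with rfl | ht
  · set M := ‖WithLp.toLp ∞ v‖ with hM
    have hi : ∀ i, ‖v i‖ ≤ M := fun i => PiLp.norm_apply_le (WithLp.toLp ∞ v) i
    have hM0 : 0 ≤ M := norm_nonneg _
    have h1 : ∑ i, ‖v i‖ ^ s.toReal ≤ n * M ^ s.toReal := by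
      refine (sum_le_sum fun i _ => Real.rpow_le_rpow (norm_nonneg _) (hi i) hs0.le).trans ?_
      simp
    refine (Real.rpow_le_rpow (sum_nonneg fun i _ => Real.rpow_nonneg (norm_nonneg _) _) h1
      (by positivity)).trans ?_
    rw [Real.mul_rpow hn0.le (by positivity), ← Real.rpow_mul hM0, mul_one_div_cancel hs0.ne',
      Real.rpow_one]
    simp
  · have hst' : s.toReal ≤ t.toReal := ENNReal.toReal_mono ht hst
    have ht0 : 0 < t.toReal := by linarith
    rw [PiLp.norm_eq_sum ht0]
    set a := s.toReal
    set b := t.toReal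
    have h1 := Real.rpow_sum_le_const_mul_sum_rpow_of_nonneg univ (f := fun i => ‖v i‖ ^ a)
      (p := b / a) ((one_le_div hs0).2 hst') (fun i _ => Real.rpow_nonneg (norm_nonneg _) _)
    have e1 : ∀ i, (‖v i‖ ^ a) ^ (b / a) = ‖v i‖ ^ b := fun i => by
      rw [← Real.rpow_mul (norm_nonneg _)]; congr 1; field_simp
    simp only [e1, card_univ, Fintype.card_fin] at h1
    have X0 : 0 ≤ ∑ i, ‖v i‖ ^ a := sum_nonneg fun i _ => Real.rpow_nonneg (norm_nonneg _) _
    have Y0 : 0 ≤ ∑ i, ‖v i‖ ^ b := sum_nonneg fun i _ => Real.rpow_nonneg (norm_nonneg _) _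
    have h2 := Real.rpow_le_rpow (Real.rpow_nonneg X0 _) h1 (show 0 ≤ 1 / b by positivity)
    rw [← Real.rpow_mul X0, Real.mul_rpow (by positivity) Y0, ← Real.rpow_mul hn0.le] at h2
    have e2 : b / a * (1 / b) = 1 / a := by field_simp
    have e3 : (b / a - 1) * (1 / b) = a⁻¹ - b⁻¹ := by field_simp
    rw [e2, e3] at h2
    exact h2

/-- identity plus finite Hilbert matrix -/
noncomputable def S (n : ℕ) : Matrix (Fin n) (Fin n) ℂ :=
  Matrix.of fun k j => (if k = j then 1 else 0) + (((j : ℕ) : ℂ) - ((k : ℕ) : ℂ))⁻¹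

lemma S_bound (r : ℝ≥0∞) [Fact (1 ≤ r)] (hr : r ≠ ∞) {N : ℝ} (hN : Bd r.toReal N) {n : ℕ}
    (v : Fin n → ℂ) : ‖WithLp.toLp r ((S n).mulVec v)‖ ≤ (N + 1) * ‖WithLp.toLp r v‖ := by
  have hr1 : 1 ≤ r.toReal := by
    have := ENNReal.toReal_mono hr (Fact.out : 1 ≤ r)
    simpa using this
  have hr0 : 0 < r.toReal := by linarith
  rw [PiLp.norm_eq_sum hr0, PiLp.norm_eq_sum hr0]
  let e : Fin n ↪ ℤ := ⟨fun k => ((k : ℕ) : ℤ), fun a b h => by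
    apply Fin.ext; simpa using h⟩
  let f : ℤ → ℂ := Function.extend e v 0
  have hf : ∀ k, f (e k) = v k := fun k => e.injective.extend_apply v 0 k
  have hL : ∀ g : ℤ → ℂ, L (univ.map e) r.toReal g
      = (∑ k, ‖g (e k)‖ ^ r.toReal) ^ (1 / r.toReal) := fun g => by
    unfold L; rw [sum_map]
  have hS : ∀ k, (S n).mulVec v k = f (e k) + (-1) * H (univ.map e) f (e k) := by
    intro k
    unfold H
    rw [sum_map]
    simp only [hf, Matrix.mulVec, dotProduct, S, Matrix.of_apply, add_mul, sum_add_distrib]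
    congr 1
    · simp
    · rw [mul_sum]
      refine sum_congr rfl fun j _ => ?_
      have : (((j : ℕ) : ℂ) - ((k : ℕ) : ℂ))⁻¹ = - (((k : ℕ) : ℂ) - ((j : ℕ) : ℂ))⁻¹ := by
        rw [← inv_neg, neg_sub]
      have he : ∀ a : Fin n, ((e a : ℤ) : ℂ) = ((a : ℕ) : ℂ) := fun a => Int.cast_natCast _
      rw [this, he, he]
      ring
  have h1 := L_add (W := univ.map e) hr1 f (fun i => (-1) * H (univ.map e) f i)
  rw [L_smul hr1] at h1
  have h2 := hN (univ.map e) f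
  have h3 : L (univ.map e) r.toReal (fun i => f i + (-1) * H (univ.map e) f i)
      ≤ (N + 1) * L (univ.map e) r.toReal f := by
    simp only [norm_neg, norm_one] at h1
    linarith
  rw [hL, hL] at h3
  simp only [hf] at h3 hS
  simpa only [hS] using h3

lemma S_op (p q r : ℝ≥0∞) [Fact (1 ≤ p)] [Fact (1 ≤ q)] [Fact (1 ≤ r)] (hqr : q ≤ r) (hrp : r ≤ p)
    (hr : r ≠ ∞) {N : ℝ} (hN0 : 0 < N) (hN : Bd r.toReal N) {n : ℕ} (hn : 1 ≤ n) :
    lpqOpNorm p q (S n) ≤ (N + 1) * (n : ℝ) ^ (q⁻¹.toReal - p⁻¹.toReal) := by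
  have hn0 : (0 : ℝ) < n := by exact_mod_cast hn
  refine opNorm_le p q _ (by positivity) fun v => ?_
  have h1 := holder_nest q r hqr (ne_top_of_le_ne_top hr hqr) hn ((S n).mulVec v)
  have h2 := S_bound r hr hN v
  have h3 := holder_nest r p hrp hr hn v
  have e : (n : ℝ) ^ (q⁻¹.toReal - p⁻¹.toReal)
      = (n : ℝ) ^ (q⁻¹.toReal - r⁻¹.toReal) * (n : ℝ) ^ (r⁻¹.toReal - p⁻¹.toReal) := by
    rw [← Real.rpow_add hn0]; congr 1; ring
  rw [e]
  calc _ ≤ _ := h1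
    _ ≤ (n : ℝ) ^ (q⁻¹.toReal - r⁻¹.toReal) * ((N + 1) * ((n : ℝ) ^ (r⁻¹.toReal - p⁻¹.toReal)
        * ‖WithLp.toLp p v‖)) := by
      refine mul_le_mul_of_nonneg_left (h2.trans ?_) (by positivity)
      exact mul_le_mul_of_nonneg_left h3 (by positivity)
    _ = _ := by ring

lemma S_pos (p q : ℝ≥0∞) [Fact (1 ≤ p)] [Fact (1 ≤ q)] {n : ℕ} (hn : 1 ≤ n) :
    0 < lpqOpNorm p q (S n) := by
  obtain ⟨e0, he0⟩ : ∃ e0 : Fin n → ℂ, (S n).mulVec e0 ⟨0, hn⟩ = 1 :=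
    ⟨Pi.single ⟨0, hn⟩ 1, by simp [S]⟩
  have h := le_opNorm p q (S n) e0
  have h1 := PiLp.norm_apply_le (WithLp.toLp q ((S n).mulVec e0)) ⟨0, hn⟩
  have h3 : 1 ≤ lpqOpNorm p q (S n) * ‖WithLp.toLp p e0‖ := by
    refine le_trans ?_ h
    refine le_trans ?_ h1
    simp [he0]
  by_contra hh
  push Not at hh
  have := mul_nonpos_of_nonpos_of_nonneg hh (norm_nonneg (WithLp.toLp p e0))
  linarith

lemma row {n : ℕ} (k : Fin n) :
    Real.log ((n - 1 - k : ℕ) + 1) ≤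
      ‖(Matrix.of fun k j : Fin n => if (k : ℕ) ≤ (j : ℕ) then S n k j else 0).mulVec
        (fun _ => 1) k‖ := by
  have hkn := k.2
  set m := n - 1 - (k : ℕ) with hm
  have h1 : (Matrix.of fun k j : Fin n => if (k : ℕ) ≤ (j : ℕ) then S n k j else 0).mulVec
        (fun _ => 1) k = (((1 : ℝ) + ∑ d ∈ Finset.Icc 1 m, (d : ℝ)⁻¹ : ℝ) : ℂ) := by
    simp only [Matrix.mulVec, dotProduct, Matrix.of_apply, mul_one, S]
    have a1 : ∀ j : Fin n, (if (k : ℕ) ≤ (j : ℕ) then ((if k = j then (1 : ℂ) else 0)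
        + (((j : ℕ) : ℂ) - ((k : ℕ) : ℂ))⁻¹) else 0) = (if k = j then 1 else 0)
        + (if (k : ℕ) ≤ (j : ℕ) then (((j : ℕ) : ℂ) - ((k : ℕ) : ℂ))⁻¹ else 0) := by
      intro j
      by_cases h : k = j
      · subst h; simp
      · simp [h]
    simp only [a1, sum_add_distrib]
    push_cast
    congr 1
    · simp
    · rw [Fin.sum_univ_eq_sum_range
        (fun j => if (k : ℕ) ≤ j then ((j : ℂ) - ((k : ℕ) : ℂ))⁻¹ else 0) n, ← sum_filter]
      have : (range n).filter (fun j => (k : ℕ) ≤ j) = insert (k : ℕ) ((Icc 1 m).image (fun d => d + (k : ℕ))) := by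
        ext x
        simp only [mem_filter, mem_range, mem_insert, mem_image, mem_Icc]
        constructor
        · rintro ⟨h, h'⟩
          by_cases hx : x = k
          · exact Or.inl hx
          · exact Or.inr ⟨x - k, by omega, by omega⟩
        · rintro (h | ⟨d, h, h'⟩) <;> omega
      rw [this, sum_insert, sum_image]
      · simp
      · intro a _ b _ h
        simpa using h
      · simp only [mem_image, mem_Icc, not_exists, not_and]
        intro d hd; omega
  rw [h1, Complex.norm_real]
  have h2 := log_add_one_le_harmonic m
  have h3 : ((harmonic m : ℚ) : ℝ) = ∑ d ∈ Finset.Icc 1 m, (d : ℝ)⁻¹ := by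
    rw [harmonic_eq_sum_Icc]; push_cast; rfl
  rw [h3] at h2
  refine le_trans ?_ (le_abs_self _)
  push_cast at h2
  linarith

lemma sum_log {n : ℕ} (hn : 1 ≤ n) :
    (n : ℝ) * Real.log n / 2 ≤ ∑ k : Fin n, Real.log ((n - 1 - k : ℕ) + 1) := by
  have e1 : ∑ k : Fin n, Real.log ((n - 1 - k : ℕ) + 1) = ∑ k ∈ range n, Real.log ((n - 1 - k : ℕ) + 1) :=
    Fin.sum_univ_eq_sum_range (fun k => Real.log ((n - 1 - k : ℕ) + 1)) n
  have e2 := sum_range_reflect (fun k : ℕ => Real.log ((k : ℝ) + 1)) n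
  have h : ∑ k ∈ range n, Real.log n ≤ ∑ k ∈ range n, (Real.log ((n - 1 - k : ℕ) + 1) + Real.log ((k : ℝ) + 1)) := by
    refine sum_le_sum fun k hk => ?_
    have hk := mem_range.1 hk
    rw [← Real.log_mul (by positivity) (by positivity)]
    refine Real.log_le_log (by exact_mod_cast hn) ?_
    have : n = (n - 1 - k) + k + 1 := by omega
    have h' : (n : ℝ) = ((n - 1 - k : ℕ) : ℝ) + k + 1 := by exact_mod_cast this
    have : 0 ≤ ((n - 1 - k : ℕ) : ℝ) * k := by positivity
    nlinarith
  rw [sum_add_distrib, ← e2] at h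
  simp only [sum_const, card_range, nsmul_eq_mul] at h
  rw [e1]
  linarith

lemma T_lower (p q : ℝ≥0∞) [Fact (1 ≤ p)] [Fact (1 ≤ q)] (hq : q ≠ ∞) {n : ℕ} (hn : 1 ≤ n) :
    (Real.log n / 2) * (n : ℝ) ^ (q⁻¹.toReal - p⁻¹.toReal) ≤ lpqOpNorm p q
      (Matrix.of fun k j : Fin n => if (k : ℕ) ≤ (j : ℕ) then S n k j else 0) := by
  have hn0 : (0 : ℝ) < n := by exact_mod_cast hn
  haveI : Nonempty (Fin n) := ⟨⟨0, hn⟩⟩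
  set A : Matrix (Fin n) (Fin n) ℂ :=
    Matrix.of fun k j : Fin n => if (k : ℕ) ≤ (j : ℕ) then S n k j else 0 with hA
  have h1 := le_opNorm p q A (fun _ => 1)
  have h2 : ‖WithLp.toLp p (fun _ : Fin n => (1 : ℂ))‖ = (n : ℝ) ^ p⁻¹.toReal := by
    have := PiLp.norm_toLp_const' (p := p) (ι := Fin n) (1 : ℂ)
    simpa [Function.const_def] using this
  have h3 := holder_nest 1 q Fact.out ENNReal.one_ne_top hn (A.mulVec (fun _ => 1))
  have h4 : (n : ℝ) * Real.log n / 2 ≤ ‖WithLp.toLp 1 (A.mulVec (fun _ => 1))‖ := by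
    rw [PiLp.norm_eq_sum (by simp)]
    simp only [ENNReal.toReal_one, Real.rpow_one, div_one]
    exact (sum_log hn).trans (sum_le_sum fun k _ => row k)
  rw [h2] at h1
  have h5 := h4.trans (h3.trans (mul_le_mul_of_nonneg_left h1 (by positivity)))
  have e : (n : ℝ) * ((n : ℝ) ^ (q⁻¹.toReal - p⁻¹.toReal))⁻¹
      = (n : ℝ) ^ ((1 : ℝ≥0∞)⁻¹.toReal - q⁻¹.toReal) * (n : ℝ) ^ p⁻¹.toReal := by
    rw [← Real.rpow_neg hn0.le, ← Real.rpow_add hn0]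
    nth_rw 1 [← Real.rpow_one (n : ℝ)]
    rw [← Real.rpow_add hn0]
    congr 1
    simp
    ring
  set x := (n : ℝ) ^ (q⁻¹.toReal - p⁻¹.toReal) with hx
  have hx0 : 0 < x := by positivity
  have h6 : (n : ℝ) * Real.log n / 2 ≤ n * x⁻¹ * lpqOpNorm p q A := by
    rw [e]; linarith
  have h7 : Real.log n / 2 ≤ x⁻¹ * lpqOpNorm p q A := by
    refine le_of_mul_le_mul_left ?_ hn0
    linarith
  rw [le_inv_mul_iff₀ hx0] at h7
  linarith

lemma exists_r (p q : ℝ≥0∞) [Fact (1 ≤ p)] [Fact (1 ≤ q)]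
    (hqp : q ≤ p) (hp : p ≠ 1) (hq : q ≠ ∞) : ∃ r : ℝ≥0∞, q ≤ r ∧ r ≤ p ∧ 1 < r ∧ r ≠ ∞ := by
  have h1 : 1 ≤ p := Fact.out
  have h2 : 1 ≤ q := Fact.out
  have h3 : 1 < p := lt_of_le_of_ne h1 hp.symm
  rcases h2.eq_or_lt with h | h
  · subst h
    obtain ⟨r, hr, hr'⟩ := exists_between h3
    exact ⟨r, hr.le, hr'.le, hr, ne_top_of_lt hr'⟩
  · exact ⟨q, le_rfl, hqp, h, hq⟩

end TriTrunc

/-- For `1 ≠ p ≥ q ≠ ∞` there is a constant `C > 0` such that for each `n` the norm of the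
triangular truncation operator `T_{Δ,n}` on `L(ℓ_p, ℓ_q)` (keeping the entries `s_{kj}` with
`k ≤ j ≤ n`) is at least `C ln n`: there is a matrix `S ≠ 0` with
`‖T_{Δ,n}(S)‖_{p→q} ≥ C ln n ‖S‖_{p→q}`. -/
theorem stmt_16 (p q : ℝ≥0∞) [Fact (1 ≤ p)] [Fact (1 ≤ q)]
    (hqp : q ≤ p) (hp : p ≠ 1) (hq : q ≠ ∞) :
    ∃ C : ℝ, 0 < C ∧ ∀ n : ℕ, 1 ≤ n →
      ∃ S : Matrix (Fin n) (Fin n) ℂ, 0 < lpqOpNorm p q S ∧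
        C * Real.log n * lpqOpNorm p q S ≤
          lpqOpNorm p q
            (Matrix.of fun k j : Fin n => if (k : ℕ) ≤ (j : ℕ) then S k j else 0) := by
  obtain ⟨r, hqr, hrp, hr1, hr⟩ := TriTrunc.exists_r p q hqp hp hq
  haveI : Fact (1 ≤ r) := ⟨hr1.le⟩
  have hr1' : 1 < r.toReal := by
    have := (ENNReal.toReal_lt_toReal ENNReal.one_ne_top hr).2 hr1
    simpa using this
  obtain ⟨N, hN0, hN⟩ := TriTrunc.riesz hr1'
  refine ⟨1 / (2 * (N + 1)), by positivity, fun n hn => ⟨TriTrunc.S n, TriTrunc.S_pos p q hn, ?_⟩⟩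
  have h1 := TriTrunc.S_op p q r hqr hrp hr hN0 hN hn
  refine le_trans ?_ (TriTrunc.T_lower p q hq hn)
  have hl : 0 ≤ Real.log n := Real.log_nonneg (by exact_mod_cast hn)
  refine (mul_le_mul_of_nonneg_left h1 (by positivity)).trans (le_of_eq ?_)
  field_simp
end
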